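/- Let R = ℝ[[z_k, z_n]] be the algebra of formal power series in the variables indexed by I, i.e. functions from multi-indices to ℝ with the Cauchy product (π·π')_β = Σ_{β₁+β₂=β} π_{β₁}·π'_{β₂}, and let D^(0) act on R componentwise via its matrix, (D^(0)π)_β := Σ_γ (D^(0))_β^γ π_γ (a finite sum). Let T* ⊂ R be the subspace of π with π_β = 0 for every non-populated β, and T̃* ⊂ R the subspace of π with π_β = 0 for every β with [β] < 0. Then for every k ≥ 1, every π ∈ T* and every c ∈ T̃*, the product π^k · (D^(0))^k c lies in T̃*. -/

import Mathlib

open Finsupp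

noncomputable section

/-- The index set `I`: symbols `z_k` for `k : ℕ` (left summand) and `z_n` for
`n ∈ ℕ² \ {(0,0)}` (right summand). -/
abbrev RSIdx : Type := ℕ ⊕ {n : ℕ × ℕ // n ≠ (0, 0)}

/-- Multi-indices: finitely supported functions from the index set to `ℕ`. -/
abbrev MIdx : Type := RSIdx →₀ ℕ

/-- The unit multi-index `e_k`. -/
def eK (k : ℕ) : MIdx := Finsupp.single (Sum.inl k) 1

/-- The unit multi-index `e_n` for `n ≠ (0,0)`. -/
def eN (n : {n : ℕ × ℕ // n ≠ (0, 0)}) : MIdx := Finsupp.single (Sum.inr n) 1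

/-- The scaled length `[β] = Σ_k k·β(k) − Σ_{n≠(0,0)} β(n)`. -/
def slen (β : MIdx) : ℤ :=
  β.sum fun i m =>
    match i with
    | Sum.inl k => (k : ℤ) * (m : ℤ)
    | Sum.inr _ => -(m : ℤ)

/-- The parabolic length `|n| = n₁ + 2 n₂` of `n ∈ ℕ²`. -/
def plen (n : ℕ × ℕ) : ℕ := n.1 + 2 * n.2

/-- The polynomial part `|β|_p = Σ_{n≠(0,0)} |n|·β(n)`. -/
def polyPart (β : MIdx) : ℕ :=
  β.sum fun i m =>
    match i with
    | Sum.inl _ => 0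
    | Sum.inr n => plen n.val * m

/-- The homogeneity `|β| = α(1+[β]) + |β|_p`. -/
def homog (α : ℝ) (β : MIdx) : ℝ := α * (1 + (slen β : ℝ)) + (polyPart β : ℝ)

/-- `β` is purely polynomial iff `β = e_n` for some `n ≠ (0,0)`. -/
def PurelyPoly (β : MIdx) : Prop := ∃ n, β = eN n

/-- `β` is populated iff it is purely polynomial or `[β] ≥ 0`. -/
def Populated (β : MIdx) : Prop := PurelyPoly β ∨ 0 ≤ slen β

/-- The ordinal `|β|_≺ = [β] + (1/2)|β|_p + (1/4)β(0)`. -/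
def precNorm (β : MIdx) : ℝ :=
  (slen β : ℝ) + (polyPart β : ℝ) / 2 + (β (Sum.inl 0) : ℝ) / 4

open Classical in
/-- The matrix entry `(D^(0))_β^γ` of the derivation
`D^(0) = Σ_k (k+1) z_{k+1} ∂_{z_k}`: it is `(k+1)·γ(k)` if there exists `k` with
`γ + e_{k+1} = β + e_k` (such `k` is unique), and `0` otherwise. -/
def D0 (β γ : MIdx) : ℕ :=
  if h : ∃ k : ℕ, γ + eK (k + 1) = β + eK k then
    (h.choose + 1) * γ (Sum.inl h.choose)
  else 0

open Classical in
/-- The matrix entry of `D^(n)` for `n ∈ ℕ²`, where `D^((0,0))` means `D^(0)` and,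
for `n ≠ (0,0)`, `(D^(n))_β^γ = β(n) + 1` if `γ = β + e_n`, and `0` otherwise. -/
def DMat (n : ℕ × ℕ) : MIdx → MIdx → ℕ :=
  if hn : n = (0, 0) then D0
  else fun β γ =>
    if γ = β + eN ⟨n, hn⟩ then β (Sum.inr ⟨n, hn⟩) + 1 else 0

/-- Composition of two `ℕ`-valued matrices indexed by multi-indices; the sum over the
intermediate multi-index is well-defined (by row-finiteness) as a `finsum`. -/
def matMul (A B : MIdx → MIdx → ℕ) : MIdx → MIdx → ℕ :=
  fun β γ => ∑ᶠ δ : MIdx, A β δ * B δ γ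

open Classical in
/-- The identity matrix. -/
def matId : MIdx → MIdx → ℕ := fun β γ => if γ = β then 1 else 0

/-- Composition of a list of matrices. -/
def matProd : List (MIdx → MIdx → ℕ) → MIdx → MIdx → ℕ
  | [] => matId
  | A :: l => matMul A (matProd l)

/-- The `l`-fold matrix power of `D^(0)`. -/
def D0pow : ℕ → MIdx → MIdx → ℕ
  | 0 => matId
  | l + 1 => matMul D0 (D0pow l)

/-- The Cauchy product on `R = ℝ[[z_k, z_n]]`, viewed as functions from
multi-indices to `ℝ`: `(π·π')_β = Σ_{β₁+β₂=β} π_{β₁} π'_{β₂}`. -/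
def cauchyMul (π π' : MIdx → ℝ) : MIdx → ℝ :=
  fun β => ∑ p ∈ Finset.HasAntidiagonal.antidiagonal β, π p.1 * π' p.2

open Classical in
/-- Cauchy powers `π^k`. -/
def cauchyPow (π : MIdx → ℝ) : ℕ → MIdx → ℝ
  | 0 => fun β => if β = 0 then 1 else 0
  | k + 1 => cauchyMul π (cauchyPow π k)

/-- `D^(0)` acting componentwise on `R` via its matrix:
`(D^(0) π)_β = Σ_γ (D^(0))_β^γ π_γ` (a finite sum). -/
def D0op (π : MIdx → ℝ) : MIdx → ℝ :=
  fun β => ∑ᶠ γ : MIdx, (D0 β γ : ℝ) * π γ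

theorem slen_add' (a b : MIdx) : slen (a + b) = slen a + slen b := by
  unfold slen
  apply Finsupp.sum_add_index'
  · rintro (k | n) <;> simp
  · rintro (k | n) x y
    · push_cast; ring
    · push_cast; ring

theorem slen_eK' (k : ℕ) : slen (eK k) = k := by
  unfold slen eK
  rw [Finsupp.sum_single_index] <;> simp

theorem slen_eN' (n : {n : ℕ × ℕ // n ≠ (0, 0)}) : slen (eN n) = -1 := by
  unfold slen eN
  rw [Finsupp.sum_single_index] <;> simp

theorem slen_populated' (β : MIdx) (h : Populated β) : -1 ≤ slen β := by
  rcases h with ⟨n, rfl⟩ | h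
  · rw [slen_eN']
  · omega

theorem cauchyMul_vanish (f g : MIdx → ℝ) (a b : ℤ)
    (hf : ∀ β, slen β < a → f β = 0) (hg : ∀ β, slen β < b → g β = 0) :
    ∀ β, slen β < a + b → cauchyMul f g β = 0 := by
  intro β hβ
  unfold cauchyMul
  apply Finset.sum_eq_zero
  rintro ⟨p, q⟩ hp
  rw [Finset.HasAntidiagonal.mem_antidiagonal] at hp
  have h := slen_add' p q
  simp only at hp ⊢
  rw [hp] at h
  by_cases h1 : slen p < a
  · rw [hf p h1, zero_mul]
  · rw [hg q (by omega), mul_zero]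

theorem cauchyPow_vanish (π : MIdx → ℝ) (hπ : ∀ β, slen β < -1 → π β = 0) (k : ℕ) :
    ∀ β, slen β < -(k : ℤ) → cauchyPow π k β = 0 := by
  induction k with
  | zero =>
    intro β hβ
    have : β ≠ 0 := by
      rintro rfl
      simp [slen] at hβ
    simp [cauchyPow, this]
  | succ k ih =>
    intro β hβ
    exact cauchyMul_vanish π _ (-1) (-(k : ℤ)) hπ ih β (by push_cast at hβ; omega)

theorem D0op_vanish (f : MIdx → ℝ) (a : ℤ) (hf : ∀ β, slen β < a → f β = 0) :
    ∀ β, slen β < a + 1 → D0op f β = 0 := by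
  intro β hβ
  unfold D0op
  apply finsum_eq_zero_of_forall_eq_zero
  intro γ
  by_cases h : ∃ k : ℕ, γ + eK (k + 1) = β + eK k
  · obtain ⟨k, hk⟩ := h
    have h := congrArg slen hk
    rw [slen_add', slen_add', slen_eK', slen_eK'] at h
    push_cast at h
    rw [hf γ (by omega), mul_zero]
  · simp [D0, h]

theorem D0op_iter_vanish (c : MIdx → ℝ) (hc : ∀ β, slen β < 0 → c β = 0) (k : ℕ) :
    ∀ β, slen β < (k : ℤ) → D0op^[k] c β = 0 := by
  induction k with
  | zero => simpa using hc
  | succ k ih =>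
    intro β hβ
    rw [Function.iterate_succ_apply']
    exact D0op_vanish _ (k : ℤ) ih β (by push_cast at hβ; exact hβ)

/-- If `π ∈ T*` (vanishing on non-populated components) and `c ∈ T̃*` (vanishing
on components with `[β] < 0`), then for every `k ≥ 1` the product
`π^k · (D^(0))^k c` lies in `T̃*`. -/
theorem statement16 (k : ℕ) (hk : 1 ≤ k) (π c : MIdx → ℝ)
    (hπ : ∀ β : MIdx, ¬ Populated β → π β = 0)
    (hc : ∀ β : MIdx, slen β < 0 → c β = 0) :
    ∀ β : MIdx, slen β < 0 → cauchyMul (cauchyPow π k) (D0op^[k] c) β = 0 := by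
  intro β hβ
  refine cauchyMul_vanish _ _ (-(k : ℤ)) (k : ℤ)
    (cauchyPow_vanish π (fun γ hγ => hπ γ fun hp => ?_) k) (D0op_iter_vanish c hc k) β (by omega)
  have := slen_populated' γ hp
  omega
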